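/- For every integer n ≥ 1 and every integer k with 0 ≤ k ≤ n−1, writing θ_k = (2k+1)π/(2n) and x_j = cos θ_j for j = 0,…,n−1, the product of distances from x_k to the other Chebyshev points of the first kind satisfies ∏_{j≠k} |x_k − x_j| = n · 2^{1−n} / sin(θ_k); in particular this product equals 2^{1−n} |T_n′(x_k)|. -/

import Mathlib

/-!
Since the points `x_j = cos θ_j` are the `n` simple roots of `T_n`, whose leading coefficient is
`2^(n-1)`, one has `T_n = 2^(n-1) ∏_j (X - x_j)`. Differentiating at the root `x_k` leaves
`T_n'(x_k) = 2^(n-1) ∏_{j≠k} (x_k - x_j)`. On the other hand `T_n' = n U_{n-1}` and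
`U_{n-1}(cos θ) sin θ = sin (n θ)`, where `n θ_k = k π + π/2` gives `|sin (n θ_k)| = 1`, so
`|T_n'(x_k)| sin θ_k = n`.
-/

open Real Polynomial

theorem chebyshev_T_eq_nodal (n : ℕ) :
    Chebyshev.T ℝ n = Polynomial.C ((2 : ℝ) ^ (n - 1)) *
      Lagrange.nodal (Finset.range n) (fun j : ℕ => cos ((2 * (j : ℝ) + 1) * π / (2 * n))) := by
  have hroots : (Chebyshev.T ℝ n).roots =
      Multiset.map (fun k : ℕ ↦ cos ((2 * (k : ℝ) + 1) * π / (2 * n))) (Multiset.range n) := by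
    rw [Chebyshev.roots_T_real, Finset.image_val, Finset.range_val,
      (Chebyshev.roots_T_real_nodup n).dedup]
  have hcard : (Chebyshev.T ℝ n).roots.card = (Chebyshev.T ℝ n).natDegree := by
    rw [hroots]; simp
  have h := C_leadingCoeff_mul_prod_multiset_X_sub_C hcard
  rw [hroots, Multiset.map_map, Chebyshev.leadingCoeff_T, Int.natAbs_natCast] at h
  exact h.symm

theorem abs_eval_derivative_T_node (n k : ℕ) (hk : k < n) :
    |(derivative (Chebyshev.T ℝ n)).eval (cos ((2 * (k : ℝ) + 1) * π / (2 * n)))| =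
      (2 : ℝ) ^ (n - 1) * ∏ j ∈ (Finset.range n).erase k,
        |cos ((2 * (k : ℝ) + 1) * π / (2 * n)) - cos ((2 * (j : ℝ) + 1) * π / (2 * n))| := by
  have h := Lagrange.eval_nodal_derivative_eval_node_eq
    (v := fun j : ℕ => cos ((2 * (j : ℝ) + 1) * π / (2 * n))) (Finset.mem_range.mpr hk)
  rw [Lagrange.eval_nodal] at h
  rw [chebyshev_T_eq_nodal, derivative_C_mul, eval_C_mul, h, abs_mul, Finset.abs_prod,
    abs_of_pos (by positivity)]

theorem abs_eval_derivative_T_node_mul_sin (n k : ℕ) (hk : k < n) :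
    |(derivative (Chebyshev.T ℝ n)).eval (cos ((2 * (k : ℝ) + 1) * π / (2 * n)))| *
      |sin ((2 * (k : ℝ) + 1) * π / (2 * n))| = n := by
  have hn : (n : ℝ) ≠ 0 := by exact_mod_cast (by omega : n ≠ 0)
  have hU := Chebyshev.U_real_cos ((2 * (k : ℝ) + 1) * π / (2 * n)) ((n : ℤ) - 1)
  have harg : (((n : ℤ) - 1 : ℤ) + 1 : ℝ) * ((2 * (k : ℝ) + 1) * π / (2 * n)) =
      k * π + π / 2 := by
    push_cast; field_simp; ring
  rw [harg, sin_add_pi_div_two] at hU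
  rw [← abs_mul, Chebyshev.T_derivative_eq_U, eval_mul, mul_assoc, hU]
  simp [abs_mul, cos_nat_mul_pi]

theorem sin_node_angle_pos (n k : ℕ) (hk : k < n) :
    0 < sin ((2 * (k : ℝ) + 1) * π / (2 * n)) := by
  have hn : (0 : ℝ) < n := by exact_mod_cast (by omega : 0 < n)
  have hkn : (k : ℝ) + 1 ≤ n := by exact_mod_cast hk
  apply sin_pos_of_pos_of_lt_pi
  · positivity
  · rw [div_lt_iff₀ (by positivity)]
    nlinarith [pi_pos]

/-- For every integer `n ≥ 1` and `0 ≤ k ≤ n−1`, writing `θ_j = (2j+1)π/(2n)` and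
`x_j = cos θ_j`, the product of distances from `x_k` to the other Chebyshev points of
the first kind satisfies `∏_{j≠k} |x_k − x_j| = n · 2^(1−n) / sin θ_k`, and this
product equals `2^(1−n) |T_n′(x_k)|`. -/
theorem chebyshev_first_kind_product_of_distances (n k : ℕ) (hn : 1 ≤ n)
    (hk : k ≤ n - 1) :
    (∏ j ∈ (Finset.range n).erase k,
        |Real.cos ((2 * (k : ℝ) + 1) * Real.pi / (2 * n)) -
          Real.cos ((2 * (j : ℝ) + 1) * Real.pi / (2 * n))|) =
      (n : ℝ) * (2 : ℝ) ^ (1 - (n : ℤ)) /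
        Real.sin ((2 * (k : ℝ) + 1) * Real.pi / (2 * n)) ∧
    (∏ j ∈ (Finset.range n).erase k,
        |Real.cos ((2 * (k : ℝ) + 1) * Real.pi / (2 * n)) -
          Real.cos ((2 * (j : ℝ) + 1) * Real.pi / (2 * n))|) =
      (2 : ℝ) ^ (1 - (n : ℤ)) *
        |(Polynomial.derivative (Polynomial.Chebyshev.T ℝ n)).eval
          (Real.cos ((2 * (k : ℝ) + 1) * Real.pi / (2 * n)))| := by
  have hkn : k < n := by omega
  have hP := abs_eval_derivative_T_node n k hkn
  have hS := abs_eval_derivative_T_node_mul_sin n k hkn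
  have hsin := sin_node_angle_pos n k hkn
  have hpow : (2 : ℝ) ^ (1 - (n : ℤ)) * 2 ^ (n - 1) = 1 := by
    rw [← zpow_natCast, ← zpow_add₀ two_ne_zero, Nat.cast_sub hn]
    simp
  rw [abs_of_pos hsin] at hS
  have h2 := congrArg ((2 : ℝ) ^ (1 - (n : ℤ)) * ·) hP
  simp only [← mul_assoc, hpow, one_mul] at h2
  refine ⟨?_, h2.symm⟩
  rw [← h2, eq_div_iff hsin.ne', mul_assoc, hS, mul_comm]
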